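/- Every POMDP Γ = (K, A, S, q, g) with a finite nonempty set of states K has a general uniform value: there exists v* : Δ(K) → ℝ such that for every ε > 0 there is α > 0 and, for each initial probability p ∈ Δ(K), a behavioral strategy σ(p), so that for every evaluation θ with I(θ) ≤ α and every p ∈ Δ(K): |v_θ(p) − v*(p)| ≤ ε and γ_θ(p, σ(p)) ≥ v*(p) − ε. -/

import Mathlib

open Set

namespace Stmt18

variable {K A S : Type*} [Fintype K]

/-- The simplex `Δ(K)` of probability vectors on `K`. -/
def ΔK (K : Type*) [Fintype K] : Set (K → ℝ) := {p | (∀ k, 0 ≤ p k) ∧ ∑ k, p k = 1}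

/-- `Δ_f`: finitely supported probability measures, as weight functions. -/
def Δf (A : Type*) : Set (A →₀ ℝ) := {u | (∀ a, 0 ≤ u a) ∧ u.sum (fun _ r => r) = 1}

/-- Behavioral strategies in the POMDP: the played mixed action only depends on the
past actions and signals. -/
def IsStrat (σ : List (A × S) → (A →₀ ℝ)) : Prop := ∀ h, σ h ∈ Δf A

/-- The (finitely supported) joint distribution at time `t` of the pair
(history of actions and signals up to stage `t`, unobserved state at stage `t+1`),
for initial distribution `p₁` and strategy `σ`. -/
noncomputable def hist (q : K → A → (S × K →₀ ℝ)) (σ : List (A × S) → (A →₀ ℝ))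
    (p₁ : K → ℝ) : ℕ → (List (A × S) × K →₀ ℝ)
  | 0 => ∑ k, Finsupp.single (([] : List (A × S)), k) (p₁ k)
  | t + 1 => (hist q σ p₁ t).sum fun hk w =>
      (σ hk.1).sum fun a pa =>
        (q hk.2 a).sum fun sk pr =>
          Finsupp.single (hk.1 ++ [(a, sk.1)], sk.2) (w * pa * pr)

/-- The expected payoff `E_{p₁,σ}(g(k_{t+1}, a_{t+1}))` at stage `t+1`. -/
noncomputable def stagePay (q : K → A → (S × K →₀ ℝ)) (g : K → A → ℝ)
    (σ : List (A × S) → (A →₀ ℝ)) (p₁ : K → ℝ) (t : ℕ) : ℝ :=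
  (hist q σ p₁ t).sum fun hk w => (σ hk.1).sum fun a pa => w * pa * g hk.2 a

/-- An evaluation: a probability distribution `θ = (θ_t)_{t ≥ 1}` over stages
(indexed here by `t : ℕ`, `t` standing for stage `t+1`). -/
def IsEval (θ : ℕ → ℝ) : Prop := (∀ t, 0 ≤ θ t) ∧ ∑' t, θ t = 1

/-- The impatience `I(θ) = Σ_{t≥1} |θ_{t+1} − θ_t|`. -/
noncomputable def impatience (θ : ℕ → ℝ) : ℝ := ∑' t, |θ (t + 1) - θ t|

/-- The `θ`-payoff `γ_θ(p₁,σ) = E_{p₁,σ}(Σ_t θ_t g(k_t,a_t))`. -/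
noncomputable def payoff (q : K → A → (S × K →₀ ℝ)) (g : K → A → ℝ)
    (θ : ℕ → ℝ) (σ : List (A × S) → (A →₀ ℝ)) (p₁ : K → ℝ) : ℝ :=
  ∑' t, θ t * stagePay q g σ p₁ t

/-- The `θ`-value `v_θ(p₁) = sup_σ γ_θ(p₁,σ)`. -/
noncomputable def value (q : K → A → (S × K →₀ ℝ)) (g : K → A → ℝ)
    (θ : ℕ → ℝ) (p₁ : K → ℝ) : ℝ :=
  sSup {c : ℝ | ∃ σ, IsStrat σ ∧ c = payoff q g θ σ p₁}

end Stmt18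
open Set
namespace Stmt18
open Classical in
/-- The (finite) set of signals which may follow action `a`. -/
noncomputable def sig {K A S : Type*} [Fintype K] (q : K → A → (S × K →₀ ℝ)) (a : A) : Finset S :=
  Finset.univ.biUnion fun k => (q k a).support.image Prod.fst

/-- Unnormalized next belief. -/
noncomputable def step {K A S : Type*} [Fintype K] (q : K → A → (S × K →₀ ℝ)) (x : K → ℝ)
    (a : A) (s : S) : K → ℝ := fun k' => ∑ k, x k * q k a (s, k')

/-- Continuation strategy. -/
def cont {A S : Type*} (σ : List (A × S) → (A →₀ ℝ)) (a : A) (s : S) : List (A × S) → (A →₀ ℝ) :=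
  fun h => σ ((a, s) :: h)

/-- Expectation of a function of history and state. -/
noncomputable def EE {K A S : Type*} [Fintype K] (q : K → A → (S × K →₀ ℝ))
    (σ : List (A × S) → (A →₀ ℝ)) (x : K → ℝ) (t : ℕ) (φ : List (A × S) → K → ℝ) : ℝ :=
  Finsupp.linearCombination ℝ (fun hk : List (A × S) × K => φ hk.1 hk.2) (hist q σ x t)

section
variable {K A S : Type*} [Fintype K]

theorem qsum (q : K → A → (S × K →₀ ℝ)) (k : K) (a : A) (φ : S → K → ℝ) :
    ((q k a).sum fun sk pr => pr * φ sk.1 sk.2) = ∑ s ∈ sig q a, ∑ k', q k a (s, k') * φ s k' := by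
  classical
  rw [← Finset.sum_product']
  rw [Finsupp.sum_of_support_subset (s := sig q a ×ˢ Finset.univ)]
  · intro sk hsk
    simp only [Finset.mem_product, Finset.mem_univ, and_true, sig, Finset.mem_biUnion, true_and,
      Finset.mem_image]
    exact ⟨k, sk, hsk, rfl⟩
  · intros; simp

theorem EE_zero (q : K → A → (S × K →₀ ℝ))
    (σ : List (A × S) → (A →₀ ℝ)) (x : K → ℝ) (φ : List (A × S) → K → ℝ) :
    EE q σ x 0 φ = ∑ k, x k * φ [] k := by
  simp [EE, hist, map_sum, Finsupp.linearCombination_single]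

theorem EE_succ (q : K → A → (S × K →₀ ℝ))
    (σ : List (A × S) → (A →₀ ℝ)) (x : K → ℝ) (t : ℕ) (φ : List (A × S) → K → ℝ) :
    EE q σ x (t + 1) φ = EE q σ x t fun h k => (σ h).sum fun a pa => pa *
      ∑ s ∈ sig q a, ∑ k', q k a (s, k') * φ (h ++ [(a, s)]) k' := by
  simp only [← qsum q _ _ (fun s k' => φ (_ ++ [(_, s)]) k')]
  simp only [EE, hist, map_finsuppSum, Finsupp.linearCombination_single]
  rw [Finsupp.linearCombination_apply]
  simp only [Finsupp.sum, Finset.mul_sum, smul_eq_mul]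
  refine Finset.sum_congr rfl fun _ _ => Finset.sum_congr rfl fun _ _ =>
    Finset.sum_congr rfl fun _ _ => by ring

theorem EE_cons (q : K → A → (S × K →₀ ℝ))
    (σ : List (A × S) → (A →₀ ℝ)) (x : K → ℝ) (t : ℕ) (φ : List (A × S) → K → ℝ) :
    EE q σ x (t + 1) φ = (σ []).sum fun a pa => pa *
      ∑ s ∈ sig q a, EE q (cont σ a s) (step q x a s) t fun h k => φ ((a, s) :: h) k := by
  induction t generalizing φ with
  | zero =>
    rw [EE_succ, EE_zero]
    simp only [EE_zero, step, Finsupp.sum, Finset.mul_sum, Finset.sum_mul, List.nil_append]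
    rw [Finset.sum_comm]
    refine Finset.sum_congr rfl fun a _ => ?_
    rw [Finset.sum_comm]
    refine Finset.sum_congr rfl fun s _ => ?_
    rw [Finset.sum_comm]
    refine Finset.sum_congr rfl fun s _ => ?_
    refine Finset.sum_congr rfl fun s _ => ?_
    ring
  | succ t ih =>
    rw [EE_succ, ih]
    simp only [EE_succ q _ _ t]
    rfl

theorem stagePay_eq (q : K → A → (S × K →₀ ℝ)) (g : K → A → ℝ)
    (σ : List (A × S) → (A →₀ ℝ)) (x : K → ℝ) (t : ℕ) :
    stagePay q g σ x t = EE q σ x t fun h k => (σ h).sum fun a pa => pa * g k a := by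
  simp only [stagePay, EE, Finsupp.linearCombination_apply, Finsupp.sum, Finset.mul_sum,
    smul_eq_mul, mul_assoc]

theorem stagePay_zero (q : K → A → (S × K →₀ ℝ)) (g : K → A → ℝ)
    (σ : List (A × S) → (A →₀ ℝ)) (x : K → ℝ) :
    stagePay q g σ x 0 = (σ []).sum fun a pa => pa * ∑ k, x k * g k a := by
  rw [stagePay_eq, EE_zero]
  simp only [Finsupp.sum, Finset.mul_sum]
  rw [Finset.sum_comm]
  refine Finset.sum_congr rfl fun s _ => ?_
  refine Finset.sum_congr rfl fun s _ => ?_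
  ring

theorem stagePay_succ (q : K → A → (S × K →₀ ℝ)) (g : K → A → ℝ)
    (σ : List (A × S) → (A →₀ ℝ)) (x : K → ℝ) (t : ℕ) :
    stagePay q g σ x (t + 1) = (σ []).sum fun a pa => pa *
      ∑ s ∈ sig q a, stagePay q g (cont σ a s) (step q x a s) t := by
  simp only [stagePay_eq, EE_cons]
  rfl

/-- mass -/
theorem step_nonneg {q : K → A → (S × K →₀ ℝ)} (hq : ∀ k a, q k a ∈ Δf (S × K))
    {x : K → ℝ} (hx : ∀ k, 0 ≤ x k) (a : A) (s : S) : ∀ k, 0 ≤ step q x a s k :=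
  fun _ => Finset.sum_nonneg fun k _ => mul_nonneg (hx k) ((hq k a).1 _)

theorem step_mass {q : K → A → (S × K →₀ ℝ)} (hq : ∀ k a, q k a ∈ Δf (S × K))
    (x : K → ℝ) (a : A) : ∑ s ∈ sig q a, ∑ k, step q x a s k = ∑ k, x k := by
  have h1 : ∀ k, ∑ s ∈ sig q a, ∑ k', q k a (s, k') = 1 := by
    intro k
    have := qsum q k a (fun _ _ => 1)
    simp only [mul_one] at this
    rw [← this]; exact (hq k a).2
  calc _ = ∑ s ∈ sig q a, ∑ k, x k * ∑ k', q k a (s, k') := by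
        refine Finset.sum_congr rfl fun s _ => ?_
        simp only [step, Finset.mul_sum]
        rw [Finset.sum_comm]
    _ = ∑ k, x k * ∑ s ∈ sig q a, ∑ k', q k a (s, k') := by
        simp only [Finset.mul_sum]
        rw [Finset.sum_comm]
    _ = _ := by simp [h1]

theorem stagePay_add (q : K → A → (S × K →₀ ℝ)) (g : K → A → ℝ)
    (σ : List (A × S) → (A →₀ ℝ)) (x y : K → ℝ) (t : ℕ) :
    stagePay q g σ (x + y) t = stagePay q g σ x t + stagePay q g σ y t := by
  induction t generalizing σ x y with
  | zero => simp [stagePay_zero, Finsupp.sum, add_mul, Finset.sum_add_distrib, mul_add]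
  | succ t ih =>
    have : ∀ a s, step q (x + y) a s = step q x a s + step q y a s := by
      intro a s; ext k; simp [step, add_mul, Finset.sum_add_distrib]
    simp [stagePay_succ, Finsupp.sum, this, ih, Finset.sum_add_distrib, mul_add]

theorem stagePay_smul (q : K → A → (S × K →₀ ℝ)) (g : K → A → ℝ)
    (σ : List (A × S) → (A →₀ ℝ)) (r : ℝ) (x : K → ℝ) (t : ℕ) :
    stagePay q g σ (r • x) t = r * stagePay q g σ x t := by
  induction t generalizing σ x with
  | zero =>
    simp only [stagePay_zero, Finsupp.sum, Finset.mul_sum, Pi.smul_apply, smul_eq_mul]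
    refine Finset.sum_congr rfl fun s _ => ?_
    refine Finset.sum_congr rfl fun s _ => ?_
    ring
  | succ t ih =>
    have : ∀ a s, step q (r • x) a s = r • step q x a s := by
      intro a s; ext k; simp [step, Finset.mul_sum, mul_assoc]
    simp only [stagePay_succ, Finsupp.sum, this, ih, Finset.mul_sum]
    refine Finset.sum_congr rfl fun s _ => ?_
    refine Finset.sum_congr rfl fun s _ => ?_
    ring

theorem cont_strat {σ : List (A × S) → (A →₀ ℝ)} (h : IsStrat σ) (a : A) (s : S) :
    IsStrat (cont σ a s) := fun _ => h _

theorem avg_le {u : A →₀ ℝ} (hu : u ∈ Δf A) {F : A → ℝ} {b : ℝ} (h : ∀ a, F a ≤ b) :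
    (u.sum fun a pa => pa * F a) ≤ b := by
  have : b = u.sum fun a pa => pa * b := by
    rw [← Finsupp.sum_mul, hu.2, one_mul]
  rw [this]
  exact Finset.sum_le_sum fun a _ => mul_le_mul_of_nonneg_left (h a) (hu.1 a)

theorem stagePay_bounds {q : K → A → (S × K →₀ ℝ)} (hq : ∀ k a, q k a ∈ Δf (S × K))
    {g : K → A → ℝ} (hg : ∀ k a, g k a ∈ Icc (0:ℝ) 1)
    {σ : List (A × S) → (A →₀ ℝ)} (hσ : IsStrat σ) {x : K → ℝ} (hx : ∀ k, 0 ≤ x k) (t : ℕ) :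
    0 ≤ stagePay q g σ x t ∧ stagePay q g σ x t ≤ ∑ k, x k := by
  induction t generalizing σ x with
  | zero =>
    rw [stagePay_zero]
    refine ⟨Finset.sum_nonneg fun a _ => mul_nonneg ((hσ _).1 _)
      (Finset.sum_nonneg fun k _ => mul_nonneg (hx k) (hg k a).1), avg_le (hσ _) fun a => ?_⟩
    exact Finset.sum_le_sum fun k _ => mul_le_of_le_one_right (hx k) (hg k a).2
  | succ t ih =>
    rw [stagePay_succ]
    refine ⟨Finset.sum_nonneg fun a _ => mul_nonneg ((hσ _).1 _)
      (Finset.sum_nonneg fun s _ => (ih (cont_strat hσ a s) (step_nonneg hq hx a s)).1),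
      avg_le (hσ _) fun a => ?_⟩
    rw [← step_mass hq x a]
    exact Finset.sum_le_sum fun s _ => (ih (cont_strat hσ a s) (step_nonneg hq hx a s)).2

/-- Agreement of strategies before stage `t`. -/
def Agree (t : ℕ) (σ τ : List (A × S) → (A →₀ ℝ)) : Prop := ∀ h, h.length < t → σ h = τ h

theorem Agree.cont {t : ℕ} {σ τ : List (A × S) → (A →₀ ℝ)} (h : Agree (t+1) σ τ) (a : A) (s : S) :
    Agree t (cont σ a s) (cont τ a s) := fun l hl => h _ (by simpa using hl)

theorem Agree.stagePay_eq {t T : ℕ} {σ τ : List (A × S) → (A →₀ ℝ)} (h : Agree T σ τ) (ht : t < T)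
    (q : K → A → (S × K →₀ ℝ)) (g : K → A → ℝ) (x : K → ℝ) :
    stagePay q g σ x t = stagePay q g τ x t := by
  induction t generalizing σ τ T x with
  | zero => rw [stagePay_zero, stagePay_zero, h [] (by simpa using ht)]
  | succ t ih =>
    obtain ⟨T, rfl⟩ : ∃ T', T = T' + 1 := ⟨T - 1, by omega⟩
    rw [stagePay_succ, stagePay_succ, h [] (by simp)]
    simp only [ih (h.cont _ _) (by omega : t < T)]

/-- Kuhn mixture of behavioral strategies. -/
noncomputable def mix : List (A × S) → ℝ → (List (A × S) → (A →₀ ℝ)) →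
    (List (A × S) → (A →₀ ℝ)) → (A →₀ ℝ)
  | [], l, σ, τ => l • σ [] + (1 - l) • τ []
  | (a, s) :: h, l, σ, τ =>
      mix h (l * σ [] a / (l * σ [] a + (1 - l) * τ [] a)) (cont σ a s) (cont τ a s)

/-- Kuhn mixture, as a strategy. -/
noncomputable def mixs (l : ℝ) (σ τ : List (A × S) → (A →₀ ℝ)) : List (A × S) → (A →₀ ℝ) :=
  fun h => mix h l σ τ

theorem Δf_convex : Convex ℝ (Δf A) := by
  intro u hu v hv a b ha hb hab
  refine ⟨fun i => ?_, ?_⟩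
  · simp only [Finsupp.coe_add, Finsupp.coe_smul, Pi.add_apply, Pi.smul_apply, smul_eq_mul]
    have := hu.1 i; have := hv.1 i; positivity
  · rw [Finsupp.sum_add_index' (by simp) (by simp), Finsupp.sum_smul_index (by simp),
      Finsupp.sum_smul_index (by simp), ← Finsupp.mul_sum, ← Finsupp.mul_sum, hu.2, hv.2]
    linarith

theorem ratio_mem {b c : ℝ} (hb : 0 ≤ b) (hc : 0 ≤ c) : b / (b + c) ∈ Icc (0:ℝ) 1 :=
  ⟨by positivity, div_le_one_of_le₀ (by linarith) (by linarith)⟩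

theorem mixs_strat {l : ℝ} (hl : l ∈ Icc (0:ℝ) 1) {σ τ : List (A × S) → (A →₀ ℝ)}
    (hσ : IsStrat σ) (hτ : IsStrat τ) : IsStrat (mixs l σ τ) := by
  intro h
  induction h generalizing l σ τ with
  | nil => exact Δf_convex (hσ _) (hτ _) hl.1 (by linarith [hl.2]) (by ring)
  | cons b h ih =>
    obtain ⟨a, s⟩ := b
    exact ih (ratio_mem (mul_nonneg hl.1 ((hσ _).1 _))
      (mul_nonneg (by linarith [hl.2]) ((hτ _).1 _))) (cont_strat hσ a s) (cont_strat hτ a s)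

theorem mixs_cont (l : ℝ) (σ τ : List (A × S) → (A →₀ ℝ)) (a : A) (s : S) :
    cont (mixs l σ τ) a s = mixs (l * σ [] a / (l * σ [] a + (1 - l) * τ [] a))
      (cont σ a s) (cont τ a s) := rfl

theorem mixs_self (l : ℝ) (σ : List (A × S) → (A →₀ ℝ)) : mixs l σ σ = σ := by
  funext h
  induction h generalizing l σ with
  | nil => simp [mixs, mix, ← add_smul]
  | cons b h ih => exact ih _ (cont σ b.1 b.2)

theorem mixs_agree (l : ℝ) {t : ℕ} {σ τ σ' τ' : List (A × S) → (A →₀ ℝ)} (h1 : Agree t σ σ')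
    (h2 : Agree t τ τ') : Agree t (mixs l σ τ) (mixs l σ' τ') := by
  intro h
  induction h generalizing l t σ τ σ' τ' with
  | nil => intro ht; simp only [mixs, mix, h1 _ ht, h2 _ ht]
  | cons b h ih =>
    intro ht
    obtain ⟨t, rfl⟩ : ∃ T', t = T' + 1 := ⟨t - 1, by simp at ht; omega⟩
    have := ih (l * σ [] b.1 / (l * σ [] b.1 + (1 - l) * τ [] b.1)) (h1.cont b.1 b.2) (h2.cont b.1 b.2)
      (by simpa using ht)
    simp only [mixs, mix] at this ⊢
    rw [this, h1 [] (by simp), h2 [] (by simp)]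

theorem mix_sum {l : ℝ} (hl : l ∈ Icc (0:ℝ) 1) {u v : A →₀ ℝ} (hu : u ∈ Δf A) (hv : v ∈ Δf A)
    (F G H : A → ℝ) (hH : ∀ a, H a = (l * u a / (l * u a + (1 - l) * v a)) * F a +
      (1 - l * u a / (l * u a + (1 - l) * v a)) * G a) :
    ((l • u + (1 - l) • v).sum fun a pa => pa * H a) =
      l * (u.sum fun a pa => pa * F a) + (1 - l) * (v.sum fun a pa => pa * G a) := by
  classical
  rw [Finsupp.sum_of_support_subset (s := u.support ∪ v.support) u Finset.subset_union_left _ (by simp),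
    Finsupp.sum_of_support_subset (s := u.support ∪ v.support) v Finset.subset_union_right _ (by simp),
    Finsupp.sum_of_support_subset (s := u.support ∪ v.support) _ _ _ (by simp), Finset.mul_sum,
    Finset.mul_sum, ← Finset.sum_add_distrib]
  · refine Finset.sum_congr rfl fun a _ => ?_
    rw [hH]
    simp only [Finsupp.coe_add, Finsupp.coe_smul, Pi.add_apply, Pi.smul_apply, smul_eq_mul]
    have h1 : 0 ≤ l * u a := mul_nonneg hl.1 (hu.1 a)
    have h2 : 0 ≤ (1 - l) * v a := mul_nonneg (by linarith [hl.2]) (hv.1 a)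
    by_cases h : l * u a + (1 - l) * v a = 0
    · have h3 : l * u a = 0 := by linarith
      have h4 : (1 - l) * v a = 0 := by linarith
      rw [h, ← mul_assoc, ← mul_assoc, h3, h4]; ring
    · field_simp
      ring
  · intro a
    simp only [Finsupp.mem_support_iff, Finset.mem_union, Finsupp.coe_add, Finsupp.coe_smul,
      Pi.add_apply, Pi.smul_apply, smul_eq_mul]
    intro h
    by_contra! h'
    simp [h'] at h

theorem stagePay_mixs {l : ℝ} (hl : l ∈ Icc (0:ℝ) 1) {σ τ : List (A × S) → (A →₀ ℝ)}
    (hσ : IsStrat σ) (hτ : IsStrat τ) (q : K → A → (S × K →₀ ℝ)) (g : K → A → ℝ) (x : K → ℝ)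
    (t : ℕ) : stagePay q g (mixs l σ τ) x t =
      l * stagePay q g σ x t + (1 - l) * stagePay q g τ x t := by
  induction t generalizing l σ τ x with
  | zero =>
    simp only [stagePay_zero]
    exact mix_sum hl (hσ _) (hτ _) _ _ _ fun a => by ring
  | succ t ih =>
    simp only [stagePay_succ]
    refine mix_sum hl (hσ _) (hτ _) _ _ _ fun a => ?_
    simp only [mixs_cont]
    rw [Finset.mul_sum, Finset.mul_sum, ← Finset.sum_add_distrib]
    refine Finset.sum_congr rfl fun s _ => ?_
    exact ih (ratio_mem (mul_nonneg hl.1 ((hσ _).1 _))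
      (mul_nonneg (by linarith [hl.2]) ((hτ _).1 _))) (cont_strat hσ a s) (cont_strat hτ a s) _
end
end Stmt18
open Set
namespace Stmt18

/-- Impatience, counting the initial jump. -/
noncomputable def imp' (θ : ℕ → ℝ) : ℝ := θ 0 + impatience θ

/-- Evaluations with small impatience. -/
def Θ (α : ℝ) : Set (ℕ → ℝ) := {θ | IsEval θ ∧ imp' θ ≤ α}

/-- Weighted sum. -/
noncomputable def pay (θ c : ℕ → ℝ) : ℝ := ∑' t, θ t * c t

theorem IsEval.summable {θ : ℕ → ℝ} (h : IsEval θ) : Summable θ := by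
  by_contra hs
  have := h.2
  rw [tsum_eq_zero_of_not_summable hs] at this
  norm_num at this

theorem IsEval.hasSum {θ : ℕ → ℝ} (h : IsEval θ) : HasSum θ 1 := h.2 ▸ h.summable.hasSum

theorem IsEval.summable_mul {θ : ℕ → ℝ} (h : IsEval θ) {c : ℕ → ℝ} {M : ℝ} (hc : ∀ t, |c t| ≤ M) :
    Summable fun t => θ t * c t := by
  refine Summable.of_norm_bounded (h.summable.mul_right M) fun t => ?_
  rw [norm_mul, Real.norm_eq_abs, Real.norm_eq_abs, abs_of_nonneg (h.1 t)]
  exact mul_le_mul_of_nonneg_left (hc t) (h.1 t)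

theorem IsEval.summable_imp {θ : ℕ → ℝ} (h : IsEval θ) :
    Summable fun t => |θ (t + 1) - θ t| := by
  refine Summable.of_nonneg_of_le (fun _ => abs_nonneg _) (fun t => ?_)
    (((summable_nat_add_iff 1).2 h.summable).add h.summable)
  exact (abs_sub _ _).trans (by rw [abs_of_nonneg (h.1 _), abs_of_nonneg (h.1 _)])

theorem IsEval.imp'_nonneg {θ : ℕ → ℝ} (h : IsEval θ) : 0 ≤ imp' θ :=
  add_nonneg (h.1 0) (tsum_nonneg fun _ => abs_nonneg _)

theorem IsEval.imp'_le {θ : ℕ → ℝ} (h : IsEval θ) : imp' θ ≤ 2 * impatience θ := by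
  have : θ 0 ≤ impatience θ := by
    have h1 : ∀ n, θ 0 - θ n ≤ impatience θ := by
      intro n
      refine le_trans ?_ (h.summable_imp.sum_le_tsum (Finset.range n) fun _ _ => abs_nonneg _)
      have := Finset.sum_range_sub θ n
      calc θ 0 - θ n = -(∑ i ∈ Finset.range n, (θ (i+1) - θ i)) := by rw [this]; ring
        _ ≤ |∑ i ∈ Finset.range n, (θ (i+1) - θ i)| := neg_le_abs _
        _ ≤ _ := Finset.abs_sum_le_sum_abs _ _
    have h2 := (tendsto_const_nhds (x := θ 0)).sub h.summable.tendsto_atTop_zero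
    have := le_of_tendsto' h2 h1
    linarith
  unfold imp'; linarith

theorem pay_bounds {θ : ℕ → ℝ} (h : IsEval θ) {c : ℕ → ℝ} {M : ℝ} (hc : ∀ t, 0 ≤ c t ∧ c t ≤ M) :
    0 ≤ pay θ c ∧ pay θ c ≤ M := by
  refine ⟨tsum_nonneg fun t => mul_nonneg (h.1 t) (hc t).1, ?_⟩
  have h1 : (∑' t, θ t * M) = M := by rw [tsum_mul_right, h.2, one_mul]
  rw [← h1]
  refine Summable.tsum_le_tsum (fun t => mul_le_mul_of_nonneg_left (hc t).2 (h.1 t)) ?_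
    (h.summable.mul_right M)
  exact h.summable_mul (M := M) fun t => abs_le.2 ⟨by linarith [hc t, (hc t).1.trans (hc t).2], (hc t).2⟩

theorem pay_shift_one {θ : ℕ → ℝ} (h : IsEval θ) {c : ℕ → ℝ} (hc : ∀ t, 0 ≤ c t ∧ c t ≤ 1) :
    |pay θ (fun t => c (t + 1)) - pay θ c| ≤ imp' θ := by
  have hc' : ∀ t, |c t| ≤ 1 := fun t => abs_le.2 ⟨by linarith [hc t], (hc t).2⟩
  have s1 : Summable fun t => θ t * c (t + 1) := h.summable_mul (fun t => hc' (t+1))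
  have s2 := h.summable_mul hc'
  have s3 : Summable fun t => θ (t+1) * c (t+1) := (summable_nat_add_iff 1).2 s2
  have e : pay θ (fun t => c (t + 1)) - pay θ c =
      (∑' t, (θ t * c (t+1) - θ (t+1) * c (t+1))) - θ 0 * c 0 := by
    rw [s1.tsum_sub s3]
    unfold pay
    rw [s2.tsum_eq_zero_add]
    ring
  have b : |∑' t, (θ t * c (t+1) - θ (t+1) * c (t+1))| ≤ impatience θ := by
    refine (norm_tsum_le_tsum_norm (s1.sub s3).norm).trans ?_
    refine Summable.tsum_le_tsum (fun t => ?_) (s1.sub s3).norm h.summable_imp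
    rw [← sub_mul, norm_mul, Real.norm_eq_abs, Real.norm_eq_abs, abs_sub_comm]
    exact mul_le_of_le_one_right (abs_nonneg _) (hc' _)
  rw [e]
  have : |θ 0 * c 0| ≤ θ 0 := by
    rw [abs_mul, abs_of_nonneg (h.1 0)]
    exact mul_le_of_le_one_right (h.1 0) (hc' _)
  refine (abs_sub _ _).trans ?_
  unfold imp'; linarith

theorem pay_shift {θ : ℕ → ℝ} (h : IsEval θ) {c : ℕ → ℝ} (hc : ∀ t, 0 ≤ c t ∧ c t ≤ 1) (j : ℕ) :
    |pay θ (fun t => c (j + t)) - pay θ c| ≤ j * imp' θ := by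
  induction j with
  | zero => simp
  | succ j ih =>
    have := pay_shift_one h (c := fun t => c (j + t)) (fun t => hc _)
    have e : (fun t => c (j + 1 + t)) = fun t => c (j + (t + 1)) := by funext t; congr 1; ring
    rw [e]
    push_cast
    have := abs_sub_le (pay θ fun t => c (j + (t + 1))) (pay θ fun t => c (j + t)) (pay θ c)
    linarith

theorem pay_finset_sum {θ : ℕ → ℝ} (h : IsEval θ) {c : ℕ → ℝ} (hc : ∀ t, 0 ≤ c t ∧ c t ≤ 1)
    (J : ℕ) (w : ℕ → ℝ) :
    ∑ j ∈ Finset.range J, w j * pay θ (fun t => c (j + t)) =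
      pay θ (fun t => ∑ j ∈ Finset.range J, w j * c (t + j)) := by
  unfold pay
  have : ∀ j, Summable fun t => w j * (θ t * c (j + t)) := fun j =>
    (h.summable_mul (M := 1) fun t => abs_le.2 ⟨by linarith [hc (j+t)], (hc (j+t)).2⟩).mul_left _
  simp only [← tsum_mul_left]
  rw [← Summable.tsum_finsetSum fun j _ => this j]
  refine tsum_congr fun t => ?_
  rw [Finset.mul_sum]
  refine Finset.sum_congr rfl fun j _ => ?_
  rw [add_comm j t]; ring

/-- Upper comparison. -/
theorem pay_le_of_windows {θ : ℕ → ℝ} (h : IsEval θ) {c : ℕ → ℝ} (hc : ∀ t, 0 ≤ c t ∧ c t ≤ 1)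
    {θ' : ℕ → ℝ} (h' : IsEval θ') {J : ℕ} {η : ℝ} (hJ : 1 - η ≤ ∑ j ∈ Finset.range J, θ' j)
    (hI : J * imp' θ ≤ η) {B : ℝ} (hB : ∀ t, pay θ' (fun j => c (t + j)) ≤ B) :
    pay θ c ≤ B + 2 * η := by
  have hs1 : ∑ j ∈ Finset.range J, θ' j ≤ 1 := by
    rw [← h'.2]; exact h'.summable.sum_le_tsum _ fun j _ => h'.1 j
  have hs0 : 0 ≤ ∑ j ∈ Finset.range J, θ' j := Finset.sum_nonneg fun j _ => h'.1 j
  have h1 : ∑ j ∈ Finset.range J, θ' j * pay θ (fun t => c (j + t)) ≤ B := by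
    rw [pay_finset_sum h hc]
    refine (pay_bounds h fun t => ⟨Finset.sum_nonneg fun j _ => mul_nonneg (h'.1 j) (hc _).1, ?_⟩).2
    refine le_trans ?_ (hB t)
    exact (h'.summable_mul (M := 1) fun j => abs_le.2 ⟨by linarith [hc (t+j)], (hc (t+j)).2⟩).sum_le_tsum
      _ fun j _ => mul_nonneg (h'.1 j) (hc _).1
  have h2 : ∑ j ∈ Finset.range J, θ' j * (pay θ c - η) ≤
      ∑ j ∈ Finset.range J, θ' j * pay θ (fun t => c (j + t)) := by
    refine Finset.sum_le_sum fun j hj => mul_le_mul_of_nonneg_left ?_ (h'.1 j)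
    have := (abs_le.1 (pay_shift h hc j)).1
    have : (j:ℝ) * imp' θ ≤ J * imp' θ := by
      refine mul_le_mul_of_nonneg_right ?_ h.imp'_nonneg
      exact_mod_cast (Finset.mem_range.1 hj).le
    linarith
  rw [← Finset.sum_mul] at h2
  have h3 := pay_bounds h hc
  have hη : 0 ≤ η := le_trans (mul_nonneg (Nat.cast_nonneg _) h.imp'_nonneg) hI
  nlinarith

theorem pay_ge {θ : ℕ → ℝ} (h : IsEval θ) {c : ℕ → ℝ} {M B : ℝ} (hc : ∀ t, |c t| ≤ M)
    (hB : ∀ t, B ≤ c t) : B ≤ pay θ c := by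
  have h1 : (∑' t, θ t * B) = B := by rw [tsum_mul_right, h.2, one_mul]
  rw [← h1]
  exact Summable.tsum_le_tsum (fun t => mul_le_mul_of_nonneg_left (hB t) (h.1 t))
    (h.summable.mul_right B) (h.summable_mul hc)

/-- Lower comparison from blocks. -/
theorem pay_ge_of_blocks {θ : ℕ → ℝ} (h : IsEval θ) {c : ℕ → ℝ} (hc : ∀ t, 0 ≤ c t ∧ c t ≤ 1)
    {N : ℕ} (hN : 0 < N) {b : ℝ} (hb : b ≤ 1) (hb0 : -1 ≤ b)
    (hB : ∀ i, N * b ≤ ∑ j ∈ Finset.range N, c (i * N + j)) {L : ℕ} (hL : 0 < L) :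
    b - 4 * N / L - L * imp' θ ≤ pay θ c := by
  set P : ℕ → ℝ := fun t => ∑ s ∈ Finset.range t, (c s - b) with hP
  have hstep : ∀ t r, |P (t + r) - P t| ≤ 2 * r := by
    intro t r
    induction r with
    | zero => simp
    | succ r ih =>
      have e : P (t + (r + 1)) - P t = (P (t + r) - P t) + (c (t + r) - b) := by
        simp only [hP, ← add_assoc, Finset.sum_range_succ]; ring
      rw [e]
      have h2 := hc (t + r)
      push_cast
      rw [abs_le] at *
      constructor <;> linarith
  have hmono : Monotone fun i => P (i * N) := by
    refine monotone_nat_of_le_succ fun i => ?_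
    have e : P ((i + 1) * N) = P (i * N) + ((∑ j ∈ Finset.range N, c (i * N + j)) - N * b) := by
      simp only [hP]
      rw [add_mul, one_mul, Finset.sum_range_add, Finset.sum_sub_distrib (f := fun j => c (i * N + j))]
      simp
    rw [e]; linarith [hB i]
  have hlow : ∀ t r, -(4 * (N:ℝ)) ≤ P (t + r) - P t := by
    intro t r
    have h1 := hstep (t / N * N) (t % N)
    have h2 := hstep ((t + r) / N * N) ((t + r) % N)
    rw [mul_comm, Nat.div_add_mod] at h1 h2
    have h3 : P (t / N * N) ≤ P ((t + r) / N * N) := hmono (Nat.div_le_div_right (Nat.le_add_right _ _))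
    have h4 : ((t % N : ℕ):ℝ) ≤ N := by exact_mod_cast (Nat.mod_lt _ hN).le
    have h5 : (((t + r) % N : ℕ):ℝ) ≤ N := by exact_mod_cast (Nat.mod_lt _ hN).le
    rw [mul_comm] at h3
    rw [mul_comm ((t + r) / N)] at h3
    rw [abs_le] at h1 h2
    linarith
  have hL' : (0:ℝ) < L := by exact_mod_cast hL
  have hwin : ∀ t, b - 4 * N / L ≤ ∑ j ∈ Finset.range L, 1 / (L:ℝ) * c (t + j) := by
    intro t
    have e : P (t + L) - P t = ∑ j ∈ Finset.range L, c (t + j) - L * b := by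
      simp only [hP]
      rw [Finset.sum_range_add, Finset.sum_sub_distrib (f := fun j => c (t + j))]
      simp
    have := hlow t L
    rw [e] at this
    rw [← Finset.mul_sum, one_div, inv_mul_eq_div, le_div_iff₀ hL', sub_mul, div_mul_cancel₀ _ hL'.ne']
    linarith
  have h1 := pay_ge h (M := 1) (c := fun t => ∑ j ∈ Finset.range L, 1 / (L:ℝ) * c (t + j)) (by
    intro t
    rw [abs_of_nonneg (Finset.sum_nonneg fun j _ => mul_nonneg (by positivity) (hc _).1)]
    calc _ ≤ ∑ j ∈ Finset.range L, 1 / (L:ℝ) * 1 := by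
          refine Finset.sum_le_sum fun j _ => mul_le_mul_of_nonneg_left (hc _).2 (by positivity)
      _ = 1 := by simp; field_simp) hwin
  rw [← pay_finset_sum h hc L (fun _ => 1 / (L:ℝ))] at h1
  have h2 : ∑ j ∈ Finset.range L, 1 / (L:ℝ) * pay θ (fun t => c (j + t)) ≤
      ∑ j ∈ Finset.range L, 1 / (L:ℝ) * (pay θ c + L * imp' θ) := by
    refine Finset.sum_le_sum fun j hj => mul_le_mul_of_nonneg_left ?_ (by positivity)
    have := (abs_le.1 (pay_shift h hc j)).2
    have : (j:ℝ) * imp' θ ≤ L * imp' θ := by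
      refine mul_le_mul_of_nonneg_right ?_ h.imp'_nonneg
      exact_mod_cast (Finset.mem_range.1 hj).le
    linarith
  have h3 : ∑ j ∈ Finset.range L, 1 / (L:ℝ) * (pay θ c + L * imp' θ) = pay θ c + L * imp' θ := by
    simp; field_simp
  linarith

/-- Uniform evaluation. -/
noncomputable def U (N : ℕ) : ℕ → ℝ := fun t => if t < N then 1 / (N:ℝ) else 0

theorem pay_U (N : ℕ) (c : ℕ → ℝ) : pay (U N) c = 1 / N * ∑ j ∈ Finset.range N, c j := by
  unfold pay
  rw [tsum_eq_sum (s := Finset.range N), Finset.mul_sum]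
  · refine Finset.sum_congr rfl fun j hj => by simp [U, Finset.mem_range.1 hj]
  · intro j hj; simp at hj; simp [U, hj]

theorem U_eval {N : ℕ} (hN : 0 < N) : IsEval (U N) := by
  refine ⟨fun t => by unfold U; split_ifs <;> positivity, ?_⟩
  have := pay_U N (fun _ => 1)
  simp only [pay, mul_one] at this
  rw [this]
  have : (N:ℝ) ≠ 0 := by positivity
  simp; field_simp

theorem U_imp {N : ℕ} (hN : 0 < N) : imp' (U N) ≤ 2 / N := by
  have h : impatience (U N) = 1 / N := by
    unfold impatience
    rw [tsum_eq_single (N - 1)]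
    · have : N - 1 + 1 = N := by omega
      rw [this]
      have h2 : N - 1 < N := by omega
      simp [U, h2]
    · intro t ht
      have : (t + 1 < N ↔ t < N) := by omega
      simp [U, this]
  unfold imp'
  rw [h]
  simp [U, hN]
  apply le_of_eq; ring

theorem U_mem {N : ℕ} (hN : 0 < N) {α : ℝ} (h : 2 / N ≤ α) : U N ∈ Θ α :=
  ⟨U_eval hN, (U_imp hN).trans h⟩

/-- Delay by one stage. -/
def delay (θ : ℕ → ℝ) : ℕ → ℝ
  | 0 => 0
  | t + 1 => θ t

theorem delay_mem {θ : ℕ → ℝ} {α : ℝ} (h : θ ∈ Θ α) : delay θ ∈ Θ α := by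
  have hs : HasSum (delay θ) 1 := by
    rw [← hasSum_nat_add_iff' 1]
    simpa [delay] using h.1.hasSum
  have he : IsEval (delay θ) := ⟨fun t => by cases t; exacts [le_rfl, h.1.1 _], hs.tsum_eq⟩
  refine ⟨he, ?_⟩
  have : imp' (delay θ) = imp' θ := by
    unfold imp' impatience
    rw [he.summable_imp.tsum_eq_zero_add]
    simp [delay, abs_of_nonneg (h.1.1 0)]
  rw [this]; exact h.2

theorem pay_delay {θ : ℕ → ℝ} (h : IsEval θ) {c : ℕ → ℝ} {M : ℝ} (hc : ∀ t, |c t| ≤ M) :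
    pay (delay θ) c = pay θ (fun t => c (t + 1)) := by
  unfold pay
  rw [Summable.tsum_eq_zero_add]
  · simp [delay]
  · rw [← summable_nat_add_iff 1]
    exact h.summable_mul (fun t => hc (t + 1))

theorem delay_iter_mem {θ : ℕ → ℝ} {α : ℝ} (h : θ ∈ Θ α) (N : ℕ) : delay^[N] θ ∈ Θ α := by
  induction N with
  | zero => exact h
  | succ N ih => rw [Function.iterate_succ_apply']; exact delay_mem ih

theorem pay_delay_iter {θ : ℕ → ℝ} {α : ℝ} (h : θ ∈ Θ α) {c : ℕ → ℝ} {M : ℝ} (hc : ∀ t, |c t| ≤ M)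
    (N : ℕ) : pay (delay^[N] θ) c = pay θ (fun t => c (N + t)) := by
  induction N generalizing c with
  | zero => simp
  | succ N ih =>
    rw [Function.iterate_succ_apply', pay_delay (delay_iter_mem h N).1 hc, ih fun t => hc _]
    congr 1; funext t; congr 1; ring

theorem Θ_convex (α : ℝ) : Convex ℝ (Θ α) := by
  intro θ hθ θ' hθ' a b ha hb hab
  have hs : HasSum (a • θ + b • θ') 1 := by
    have := (hθ.1.hasSum.mul_left a).add (hθ'.1.hasSum.mul_left b)
    rw [mul_one, mul_one, hab] at this
    exact this
  have he : IsEval (a • θ + b • θ') := ⟨fun t => by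
    have := hθ.1.1 t; have := hθ'.1.1 t
    simp only [Pi.add_apply, Pi.smul_apply, smul_eq_mul]; positivity, hs.tsum_eq⟩
  refine ⟨he, ?_⟩
  have h1 : impatience (a • θ + b • θ') ≤ a * impatience θ + b * impatience θ' := by
    unfold impatience
    rw [← tsum_mul_left, ← tsum_mul_left, ← (hθ.1.summable_imp.mul_left a).tsum_add
      (hθ'.1.summable_imp.mul_left b)]
    refine Summable.tsum_le_tsum (fun t => ?_) he.summable_imp
      ((hθ.1.summable_imp.mul_left a).add (hθ'.1.summable_imp.mul_left b))
    simp only [Pi.add_apply, Pi.smul_apply, smul_eq_mul]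
    calc _ = |a * (θ (t+1) - θ t) + b * (θ' (t+1) - θ' t)| := by congr 1; ring
      _ ≤ _ := (abs_add_le _ _).trans (by rw [abs_mul, abs_mul, abs_of_nonneg ha, abs_of_nonneg hb])
  have h2 := hθ.2
  have h3 := hθ'.2
  unfold imp' at *
  simp only [Pi.add_apply, Pi.smul_apply, smul_eq_mul]
  calc _ ≤ a * (θ 0 + impatience θ) + b * (θ' 0 + impatience θ') := by linarith
    _ ≤ a * α + b * α := by gcongr
    _ = α := by rw [← add_mul, hab, one_mul]

theorem pay_mix {ι : Type*} (s : Finset ι) (w : ι → ℝ) (ϑ : ι → ℕ → ℝ) (h : ∀ i, IsEval (ϑ i))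
    {c : ℕ → ℝ} {M : ℝ} (hc : ∀ t, |c t| ≤ M) :
    pay (∑ i ∈ s, w i • ϑ i) c = ∑ i ∈ s, w i * pay (ϑ i) c := by
  unfold pay
  simp only [← tsum_mul_left]
  rw [← Summable.tsum_finsetSum fun j _ => ((h j).summable_mul hc).mul_left _]
  refine tsum_congr fun t => ?_
  simp [Finset.sum_mul, mul_assoc]

/-- Finite minimax. -/
theorem minimax {ι : Type*} [Fintype ι] [Nonempty ι] {C : Set (ι → ℝ)} (hC : Convex ℝ C) {c : ℝ}
    (h : ∀ w : ι → ℝ, (∀ i, 0 ≤ w i) → ∑ i, w i = 1 → ∃ y ∈ C, c ≤ ∑ i, w i * y i)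
    {η : ℝ} (hη : 0 < η) : ∃ y ∈ C, ∀ i, c - η ≤ y i := by
  classical
  by_contra! hcon
  set O : Set (ι → ℝ) := Set.pi univ fun _ => Ioi (c - η) with hO
  have hOo : IsOpen O := isOpen_set_pi finite_univ fun _ _ => isOpen_Ioi
  have hOc : Convex ℝ O := convex_pi fun _ _ => convex_Ioi _
  have hd : Disjoint O C := by
    rw [Set.disjoint_left]
    intro y hy hyC
    obtain ⟨i, hi⟩ := hcon y hyC
    exact absurd (hy i trivial) (by simpa using hi.le)
  obtain ⟨f, u, hf1, hf2⟩ := geometric_hahn_banach_open hOc hOo hC hd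
  have hfe : ∀ y, f y = ∑ i, y i * f (Pi.single i 1) := by
    intro y
    conv_lhs => rw [← Finset.univ_sum_single y, map_sum]
    refine Finset.sum_congr rfl fun i _ => ?_
    rw [← smul_eq_mul, ← map_smul]
    congr 1
    rw [← Pi.single_smul]; simp
  set l : ι → ℝ := fun i => - f (Pi.single i 1) with hl
  have hfl : ∀ y, f y = - ∑ i, l i * y i := by
    intro y; rw [hfe, ← Finset.sum_neg_distrib]
    refine Finset.sum_congr rfl fun i _ => by simp [hl]; ring
  have hl0 : ∀ i, 0 ≤ l i := by
    intro i
    by_contra! hi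
    have hx : ∀ r : ℝ, 0 ≤ r → - ∑ j, l j * c - l i * r < u := by
      intro r hr
      have := hf1 (fun j => c + (Pi.single i r : ι → ℝ) j) (by
        intro j _
        have : 0 ≤ (Pi.single i r : ι → ℝ) j := by
          by_cases hj : j = i
          · subst hj; simpa using hr
          · simp [hj]
        simp only [mem_Ioi]; linarith)
      rw [hfl] at this
      simp only [mul_add, Finset.sum_add_distrib] at this
      simp only [Pi.single_apply, mul_ite, mul_zero, Finset.sum_ite_eq', Finset.mem_univ, if_true] at this
      linarith
    have h1 := hx 0 le_rfl
    have h2 := hx ((u + ∑ j, l j * c) / (-l i)) (div_nonneg (by linarith) (by linarith))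
    have : l i * ((u + ∑ j, l j * c) / (-l i)) = -(u + ∑ j, l j * c) := by
      rw [div_neg, mul_neg, mul_div_cancel₀ _ hi.ne]
    linarith
  obtain ⟨y0, hy0, -⟩ := h (fun _ => 1 / Fintype.card ι) (fun _ => by positivity) (by simp)
  have hls : 0 < ∑ i, l i := by
    rcases (Finset.sum_nonneg fun i _ => hl0 i : 0 ≤ ∑ i, l i).lt_or_eq with h1 | h1
    · exact h1
    · exfalso
      have hz : ∀ i, l i = 0 := fun i =>
        (Finset.sum_eq_zero_iff_of_nonneg fun i _ => hl0 i).1 h1.symm i (Finset.mem_univ _)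
      have a1 := hf1 (fun _ => c) (fun j _ => by simp [hη])
      have a2 := hf2 y0 hy0
      rw [hfl] at a1 a2
      simp [hz] at a1 a2
      linarith
  obtain ⟨y, hy, hy2⟩ := h (fun i => l i / ∑ i, l i) (fun i => div_nonneg (hl0 i) hls.le)
    (by rw [← Finset.sum_div, div_self hls.ne'])
  have a1 := hf1 (fun _ => c - η / 2) (fun j _ => by simp only [mem_Ioi]; linarith)
  have a2 := hf2 y hy
  rw [hfl] at a1 a2
  have : ∑ i, l i / (∑ i, l i) * y i = (∑ i, l i * y i) / ∑ i, l i := by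
    rw [Finset.sum_div]; exact Finset.sum_congr rfl fun i _ => by ring
  rw [this, le_div_iff₀ hls] at hy2
  rw [← Finset.sum_mul] at a1
  nlinarith

/-- Finite nets for equi-Lipschitz families on the simplex. -/
theorem exists_net {K : Type*} [Fintype K] {ι : Type*} (T : Set ι) (f : ι → (K → ℝ) → ℝ)
    (hb : ∀ i ∈ T, ∀ p ∈ ΔK K, f i p ∈ Icc (0:ℝ) 1)
    (hl : ∀ i ∈ T, ∀ p ∈ ΔK K, ∀ p' ∈ ΔK K, |f i p - f i p'| ≤ ∑ k, |p k - p' k|)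
    {δ : ℝ} (hδ : 0 < δ) :
    ∃ F : Finset ι, (∀ i ∈ F, i ∈ T) ∧ ∀ i ∈ T, ∃ j ∈ F, ∀ p ∈ ΔK K, |f i p - f j p| ≤ δ := by
  classical
  have hcard : (0:ℝ) < Fintype.card K + 1 := by positivity
  have hX : TotallyBounded (ΔK K) := by
    refine (isCompact_Icc (a := (0 : K → ℝ)) (b := 1)).totallyBounded.subset ?_
    intro p hp
    refine ⟨fun k => hp.1 k, fun k => ?_⟩
    show p k ≤ 1
    rw [← hp.2]; exact Finset.single_le_sum (fun k _ => hp.1 k) (Finset.mem_univ k)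
  obtain ⟨P, hPX, hPf, hP⟩ := Metric.finite_approx_of_totallyBounded hX (δ / 4 / (Fintype.card K + 1))
    (by positivity)
  have : Fintype P := hPf.fintype
  let ev : ι → (P → ℝ) := fun i p => f i p
  have hE : TotallyBounded (ev '' T) := by
    refine (isCompact_Icc (a := (0 : P → ℝ)) (b := 1)).totallyBounded.subset ?_
    rintro _ ⟨i, hi, rfl⟩
    exact ⟨fun p => (hb i hi p (hPX p.2)).1, fun p => (hb i hi p (hPX p.2)).2⟩
  obtain ⟨E, hET, hEf, hE⟩ := Metric.finite_approx_of_totallyBounded hE (δ / 2) (by positivity)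
  obtain ⟨F, hFT, hFf, hFE⟩ : ∃ F ⊆ T, F.Finite ∧ ev '' F = E := by
    exact (Set.exists_subset_image_finite_and (p := fun s => s = E)).1 ⟨E, hET, hEf, rfl⟩
  refine ⟨hFf.toFinset, fun i hi => hFT (by simpa using hi), fun i hi => ?_⟩
  have := hE ⟨i, hi, rfl⟩
  rw [← hFE] at this
  simp only [mem_iUnion, Metric.mem_ball, exists_prop, mem_image] at this
  obtain ⟨_, ⟨j, hj, rfl⟩, hd⟩ := this
  refine ⟨j, by simpa using hj, fun p hp => ?_⟩
  have := hP hp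
  simp only [mem_iUnion, Metric.mem_ball, exists_prop] at this
  obtain ⟨p', hp', hd'⟩ := this
  have hsum : ∑ k, |p k - p' k| ≤ δ / 4 := by
    calc _ ≤ ∑ k : K, δ / 4 / (Fintype.card K + 1) := by
          refine Finset.sum_le_sum fun k _ => ?_
          rw [← Real.dist_eq]
          exact (dist_le_pi_dist p p' k).trans hd'.le
      _ = Fintype.card K * (δ / 4 / (Fintype.card K + 1)) := by simp
      _ ≤ (Fintype.card K + 1) * (δ / 4 / (Fintype.card K + 1)) := by gcongr; linarith
      _ = δ / 4 := by field_simp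
  have h1 := (hl i hi p hp p' (hPX hp')).trans hsum
  have h2 := (hl j (hFT hj) p hp p' (hPX hp')).trans hsum
  have h3 : |f i p' - f j p'| ≤ δ / 2 := by
    rw [← Real.dist_eq]
    exact (dist_le_pi_dist (ev i) (ev j) ⟨p', hp'⟩).trans hd.le
  rw [abs_le] at *
  constructor <;> linarith
end Stmt18
open Set
namespace Stmt18

theorem pay_sum {ι : Type*} {θ : ℕ → ℝ} (h : IsEval θ) (s : Finset ι) (f : ι → ℕ → ℝ) {M : ℝ}
    (hf : ∀ i ∈ s, ∀ t, |f i t| ≤ M) : pay θ (fun t => ∑ i ∈ s, f i t) = ∑ i ∈ s, pay θ (f i) := by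
  unfold pay
  rw [← Summable.tsum_finsetSum fun j hj => h.summable_mul (hf j hj)]
  exact tsum_congr fun t => Finset.mul_sum _ _ _

theorem pay_mul (θ : ℕ → ℝ) (r : ℝ) (c : ℕ → ℝ) : pay θ (fun t => r * c t) = r * pay θ c := by
  unfold pay
  rw [← tsum_mul_left]
  exact tsum_congr fun t => by ring

theorem pay_mono {θ : ℕ → ℝ} (h : IsEval θ) {c d : ℕ → ℝ} {M : ℝ} (hc : ∀ t, |c t| ≤ M)
    {M' : ℝ} (hd : ∀ t, |d t| ≤ M') {r : ℝ} (hcd : ∀ t, c t ≤ d t + r) : pay θ c ≤ pay θ d + r := by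
  have h1 : (∑' t, θ t * r) = r := by rw [tsum_mul_right, h.2, one_mul]
  have h2 : pay θ d + r = ∑' t, (θ t * d t + θ t * r) := by
    rw [(h.summable_mul hd).tsum_add (h.summable.mul_right r), h1]; rfl
  rw [h2]
  refine Summable.tsum_le_tsum (fun t => ?_) (h.summable_mul hc)
    ((h.summable_mul hd).add (h.summable.mul_right r))
  rw [← mul_add]
  exact mul_le_mul_of_nonneg_left (hcd t) (h.1 t)

/-- Assembling a strategy from a first mixed action and continuations. -/
def glue {A S : Type*} (u : A →₀ ℝ) (T : A → S → List (A × S) → (A →₀ ℝ)) :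
    List (A × S) → (A →₀ ℝ)
  | [] => u
  | b :: h => T b.1 b.2 h

section
variable {K A S : Type*} [Fintype K]
  {q : K → A → (S × K →₀ ℝ)} 
  {g : K → A → ℝ}


theorem sp_abs (hq : ∀ k a, q k a ∈ Δf (S × K))
    (hg : ∀ k a, g k a ∈ Icc (0:ℝ) 1) {σ : List (A × S) → (A →₀ ℝ)} (hσ : IsStrat σ) {x : K → ℝ} (hx : ∀ k, 0 ≤ x k)
    (t : ℕ) : |stagePay q g σ x t| ≤ ∑ k, x k := by
  have := stagePay_bounds hq hg hσ hx t
  rw [abs_of_nonneg this.1]; exact this.2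

theorem sp_unit (hq : ∀ k a, q k a ∈ Δf (S × K))
    (hg : ∀ k a, g k a ∈ Icc (0:ℝ) 1) {σ : List (A × S) → (A →₀ ℝ)} (hσ : IsStrat σ) {p : K → ℝ} (hp : p ∈ ΔK K)
    (t : ℕ) : 0 ≤ stagePay q g σ p t ∧ stagePay q g σ p t ≤ 1 := by
  have := stagePay_bounds hq hg hσ hp.1 t
  rwa [hp.2] at this

theorem payoff_bounds (hq : ∀ k a, q k a ∈ Δf (S × K))
    (hg : ∀ k a, g k a ∈ Icc (0:ℝ) 1) {θ : ℕ → ℝ} (h : IsEval θ) {σ : List (A × S) → (A →₀ ℝ)} (hσ : IsStrat σ)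
    {p : K → ℝ} (hp : p ∈ ΔK K) : 0 ≤ payoff q g θ σ p ∧ payoff q g θ σ p ≤ 1 :=
  pay_bounds h (sp_unit hq hg hσ hp)

theorem payoff_lip (hq : ∀ k a, q k a ∈ Δf (S × K))
    (hg : ∀ k a, g k a ∈ Icc (0:ℝ) 1) {θ : ℕ → ℝ} (h : IsEval θ) {σ : List (A × S) → (A →₀ ℝ)} (hσ : IsStrat σ)
    {p p' : K → ℝ} (hp : p ∈ ΔK K) (hp' : p' ∈ ΔK K) :
    payoff q g θ σ p ≤ payoff q g θ σ p' + ∑ k, |p k - p' k| := by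
  refine pay_mono h (sp_abs hq hg hσ hp.1) (sp_abs hq hg hσ hp'.1) fun t => ?_
  set u : K → ℝ := fun k => max (p k - p' k) 0
  set v : K → ℝ := fun k => max (p' k - p k) 0
  have e : p + v = p' + u := by
    ext k
    simp only [u, v, Pi.add_apply]
    rcases le_total (p k) (p' k) with h | h
    · rw [max_eq_left (by linarith), max_eq_right (by linarith)]; ring
    · rw [max_eq_right (by linarith), max_eq_left (by linarith)]; ring
  have e2 := congrArg (fun x => stagePay q g σ x t) e
  simp only [stagePay_add] at e2
  have h1 := (stagePay_bounds hq hg hσ (x := v) (fun k => le_max_right _ _) t).1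
  have h2 := (stagePay_bounds hq hg hσ (x := u) (fun k => le_max_right _ _) t).2
  have h3 : ∑ k, u k ≤ ∑ k, |p k - p' k| :=
    Finset.sum_le_sum fun k _ => max_le (le_abs_self _) (abs_nonneg _)
  linarith

theorem payoff_le_value (hq : ∀ k a, q k a ∈ Δf (S × K))
    (hg : ∀ k a, g k a ∈ Icc (0:ℝ) 1) {θ : ℕ → ℝ} (h : IsEval θ) {σ : List (A × S) → (A →₀ ℝ)} (hσ : IsStrat σ)
    {p : K → ℝ} (hp : p ∈ ΔK K) : payoff q g θ σ p ≤ value q g θ p := by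
  refine le_csSup ⟨1, ?_⟩ ⟨σ, hσ, rfl⟩
  rintro _ ⟨τ, hτ, rfl⟩
  exact (payoff_bounds hq hg h hτ hp).2

theorem exists_strat [Nonempty A] : ∃ σ : List (A × S) → (A →₀ ℝ), IsStrat σ := by
  classical
  refine ⟨fun _ => Finsupp.single (Classical.arbitrary A) 1, fun _ => ⟨fun a => ?_, by simp⟩⟩
  rw [Finsupp.single_apply]; split_ifs <;> norm_num

theorem exists_near [Nonempty A] (θ : ℕ → ℝ) (p : K → ℝ)
    {η : ℝ} (hη : 0 < η) : ∃ σ : List (A × S) → (A →₀ ℝ), IsStrat σ ∧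
      value q g θ p - η < payoff q g θ σ p := by
  obtain ⟨σ0, h0⟩ := exists_strat (A := A) (S := S)
  obtain ⟨_, ⟨σ, hσ, rfl⟩, hlt⟩ := exists_lt_of_lt_csSup
    (s := {c : ℝ | ∃ σ, IsStrat σ ∧ c = payoff q g θ σ p}) ⟨_, σ0, h0, rfl⟩ (sub_lt_self (value q g θ p) hη)
  exact ⟨σ, hσ, hlt⟩

theorem value_le [Nonempty A] {θ : ℕ → ℝ} {p : K → ℝ} {B : ℝ}
    (hB : ∀ σ : List (A × S) → (A →₀ ℝ), IsStrat σ → payoff q g θ σ p ≤ B) : value q g θ p ≤ B := by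
  obtain ⟨σ0, h0⟩ := exists_strat (A := A) (S := S)
  refine csSup_le ⟨_, σ0, h0, rfl⟩ ?_
  rintro _ ⟨τ, hτ, rfl⟩
  exact hB τ hτ

theorem value_bounds (hq : ∀ k a, q k a ∈ Δf (S × K))
    (hg : ∀ k a, g k a ∈ Icc (0:ℝ) 1) [Nonempty A] {θ : ℕ → ℝ} (h : IsEval θ) {p : K → ℝ} (hp : p ∈ ΔK K) :
    value q g θ p ∈ Icc (0:ℝ) 1 := by
  obtain ⟨σ0, h0⟩ := exists_strat (A := A) (S := S)
  exact ⟨(payoff_bounds hq hg h h0 hp).1.trans (payoff_le_value hq hg h h0 hp),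
    value_le fun σ hσ => (payoff_bounds hq hg h hσ hp).2⟩

theorem value_lip (hq : ∀ k a, q k a ∈ Δf (S × K))
    (hg : ∀ k a, g k a ∈ Icc (0:ℝ) 1) [Nonempty A] {θ : ℕ → ℝ} (h : IsEval θ) {p p' : K → ℝ} (hp : p ∈ ΔK K)
    (hp' : p' ∈ ΔK K) : |value q g θ p - value q g θ p'| ≤ ∑ k, |p k - p' k| := by
  have key : ∀ p ∈ ΔK K, ∀ p' ∈ ΔK K, value q g θ p ≤ value q g θ p' + ∑ k, |p k - p' k| := by
    intro p hp p' hp'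
    refine value_le fun σ hσ => ?_
    have h1 := payoff_lip hq hg h hσ hp hp'
    have h2 := payoff_le_value hq hg h hσ hp'
    linarith
  have h1 := key p hp p' hp'
  have h2 := key p' hp' p hp
  simp only [abs_sub_comm (p' _)] at h2
  rw [abs_le]; constructor <;> linarith

theorem pay_succ (hq : ∀ k a, q k a ∈ Δf (S × K))
    (hg : ∀ k a, g k a ∈ Icc (0:ℝ) 1) {θ : ℕ → ℝ} (h : IsEval θ) {σ : List (A × S) → (A →₀ ℝ)} (hσ : IsStrat σ)
    {x : K → ℝ} (hx : ∀ k, 0 ≤ x k) (t : ℕ) :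
    pay θ (fun j => stagePay q g σ x (t + 1 + j)) = (σ []).sum fun a pa => pa *
      ∑ s ∈ sig q a, pay θ (fun j => stagePay q g (cont σ a s) (step q x a s) (t + j)) := by
  have hm : ∀ a, ∀ s ∈ sig q a, ∀ j,
      |stagePay q g (cont σ a s) (step q x a s) (t + j)| ≤ ∑ k, x k := by
    intro a s hs j
    refine (sp_abs hq hg (cont_strat hσ a s) (step_nonneg hq hx a s) _).trans ?_
    rw [← step_mass hq x a]
    exact Finset.single_le_sum (f := fun s => ∑ k, step q x a s k)
      (fun s _ => Finset.sum_nonneg fun k _ => step_nonneg hq hx a s k) hs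
  have e : ∀ j, t + 1 + j = (t + j) + 1 := fun j => by ring
  simp only [e, stagePay_succ, Finsupp.sum]
  rw [pay_sum h (M := ∑ k, x k)]
  · refine Finset.sum_congr rfl fun a _ => ?_
    rw [pay_mul, pay_sum h _ _ (hm a)]
  · intro a ha j
    have h1 : σ [] a ≤ 1 := by
      rw [← (hσ []).2]
      exact Finset.single_le_sum (f := fun a => σ [] a) (fun a _ => (hσ []).1 a) ha
    have h2 : |∑ s ∈ sig q a, stagePay q g (cont σ a s) (step q x a s) (t + j)| ≤ ∑ k, x k := by
      refine (Finset.abs_sum_le_sum_abs _ _).trans ?_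
      rw [← step_mass hq x a]
      exact Finset.sum_le_sum fun s _ => sp_abs hq hg (cont_strat hσ a s) (step_nonneg hq hx a s) _
    rw [abs_mul, abs_of_nonneg ((hσ []).1 a)]
    exact (mul_le_of_le_one_left (abs_nonneg _) h1).trans h2

/-- Domination is preserved under delays, with a continuation chosen at the delayed stage. -/
theorem dom_shift (hq : ∀ k a, q k a ∈ Δf (S × K))
    (hg : ∀ k a, g k a ∈ Icc (0:ℝ) 1) {θ θ' : ℕ → ℝ} (h : IsEval θ) (h' : IsEval θ') {δ : ℝ}
    (hd : ∀ x : K → ℝ, (∀ k, 0 ≤ x k) → ∀ τ : List (A × S) → (A →₀ ℝ), IsStrat τ →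
      ∃ τ' : List (A × S) → (A →₀ ℝ), IsStrat τ' ∧ payoff q g θ τ x ≤ payoff q g θ' τ' x + δ * ∑ k, x k)
    (t : ℕ) (x : K → ℝ) (hx : ∀ k, 0 ≤ x k) (τ : List (A × S) → (A →₀ ℝ)) (hτ : IsStrat τ) :
    ∃ τ' : List (A × S) → (A →₀ ℝ), IsStrat τ' ∧ Agree t τ' τ ∧
      pay θ (fun j => stagePay q g τ x (t + j)) ≤
        pay θ' (fun j => stagePay q g τ' x (t + j)) + δ * ∑ k, x k := by
  induction t generalizing x τ with
  | zero =>
    obtain ⟨τ', h1, h2⟩ := hd x hx τ hτ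
    refine ⟨τ', h1, fun h hh => by simp at hh, ?_⟩
    simp only [zero_add]
    exact h2
  | succ t ih =>
    choose T hT1 hT2 hT3 using fun a s => ih (step q x a s) (step_nonneg hq hx a s) (cont τ a s)
      (cont_strat hτ a s)
    have hst : IsStrat (glue (τ []) T) := by
      intro l
      cases l with
      | nil => exact hτ []
      | cons b l => exact hT1 b.1 b.2 l
    refine ⟨glue (τ []) T, hst, ?_, ?_⟩
    · intro l hl
      cases l with
      | nil => rfl
      | cons b l => exact hT2 b.1 b.2 l (by simpa using hl)
    · rw [pay_succ hq hg h hτ hx, pay_succ hq hg h' hst hx]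
      have e : δ * ∑ k, x k = (τ []).sum fun a pa => pa * (δ * ∑ s ∈ sig q a, ∑ k, step q x a s k) := by
        simp only [step_mass hq x]
        rw [← Finsupp.sum_mul, (hτ []).2, one_mul]
      rw [e]
      simp only [Finsupp.sum]
      show _ ≤ ∑ a ∈ (τ []).support, τ [] a * ∑ s ∈ sig q a,
        pay θ' (fun j => stagePay q g (T a s) (step q x a s) (t + j)) + _
      rw [← Finset.sum_add_distrib]
      refine Finset.sum_le_sum fun a _ => ?_
      rw [← mul_add]
      refine mul_le_mul_of_nonneg_left ?_ ((hτ []).1 a)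
      rw [Finset.mul_sum, ← Finset.sum_add_distrib]
      exact Finset.sum_le_sum fun s _ => hT3 a s

theorem payoff_smul (θ : ℕ → ℝ) (σ : List (A × S) → (A →₀ ℝ)) (r : ℝ) (x : K → ℝ) :
    payoff q g θ σ (r • x) = r * payoff q g θ σ x := by
  show pay θ (fun t => stagePay q g σ (r • x) t) = r * pay θ (fun t => stagePay q g σ x t)
  simp only [stagePay_smul, pay_mul]

theorem dom_of_value (hq : ∀ k a, q k a ∈ Δf (S × K))
    (hg : ∀ k a, g k a ∈ Icc (0:ℝ) 1) [Nonempty A] {θ θ' : ℕ → ℝ} (h : IsEval θ) {δ δ' : ℝ} (hδ : δ < δ')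
    (hv : ∀ p ∈ ΔK K, value q g θ p ≤ value q g θ' p + δ)
    (x : K → ℝ) (hx : ∀ k, 0 ≤ x k) (τ : List (A × S) → (A →₀ ℝ)) (hτ : IsStrat τ) :
    ∃ τ' : List (A × S) → (A →₀ ℝ), IsStrat τ' ∧
      payoff q g θ τ x ≤ payoff q g θ' τ' x + δ' * ∑ k, x k := by
  obtain ⟨m, hm⟩ : ∃ m, m = ∑ k, x k := ⟨_, rfl⟩
  rw [← hm]
  rcases (hm ▸ Finset.sum_nonneg fun k _ => hx k : 0 ≤ m).lt_or_eq with h0 | h0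
  · set p : K → ℝ := m⁻¹ • x with hp
    have hpX : p ∈ ΔK K := by
      refine ⟨fun k => mul_nonneg (by positivity) (hx k), ?_⟩
      simp only [hp, Pi.smul_apply, smul_eq_mul]
      rw [← Finset.mul_sum, ← hm, inv_mul_cancel₀ h0.ne']
    have hxp : x = m • p := by rw [hp, smul_smul, mul_inv_cancel₀ h0.ne', one_smul]
    obtain ⟨τ', h1, h2⟩ := exists_near (q := q) (g := g) θ' p (sub_pos.2 hδ)
    refine ⟨τ', h1, ?_⟩
    have h3 := payoff_le_value hq hg h hτ hpX
    have h4 := hv p hpX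
    have e1 : payoff q g θ τ x = m * payoff q g θ τ p := by rw [← payoff_smul, ← hxp]
    have e2 : payoff q g θ' τ' x = m * payoff q g θ' τ' p := by rw [← payoff_smul, ← hxp]
    rw [e1, e2]
    nlinarith
  · have hz : x = (0:ℝ) • x := by
      ext k
      have := (Finset.sum_eq_zero_iff_of_nonneg fun k _ => hx k).1 (hm.symm.trans h0.symm) k (Finset.mem_univ _)
      simp [this]
    refine ⟨τ, hτ, ?_⟩
    rw [hz, payoff_smul, payoff_smul, ← h0]; simp

end
end Stmt18
open Set
namespace Stmt18

theorem Θ_mono {α β : ℝ} (h : α ≤ β) : Θ α ⊆ Θ β := fun _ hθ => ⟨hθ.1, hθ.2.trans h⟩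

theorem pay_lin {θ : ℕ → ℝ} (h : IsEval θ) {c d : ℕ → ℝ} {M : ℝ} (hc : ∀ t, |c t| ≤ M)
    (hd : ∀ t, |d t| ≤ M) (a b : ℝ) :
    pay θ (fun t => a * c t + b * d t) = a * pay θ c + b * pay θ d := by
  rw [← pay_mul, ← pay_mul]
  unfold pay
  rw [← Summable.tsum_add]
  · exact tsum_congr fun t => by ring
  · exact ((h.summable_mul hc).mul_left a).congr fun t => by ring
  · exact ((h.summable_mul hd).mul_left b).congr fun t => by ring

section
variable {K A S : Type*} [Fintype K]

theorem Agree.trans {t : ℕ} {σ τ ρ : List (A × S) → (A →₀ ℝ)} (h1 : Agree t σ τ) (h2 : Agree t τ ρ) :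
    Agree t σ ρ := fun h hh => (h1 h hh).trans (h2 h hh)

theorem Agree.symm {t : ℕ} {σ τ : List (A × S) → (A →₀ ℝ)} (h1 : Agree t σ τ) :
    Agree t τ σ := fun h hh => (h1 h hh).symm

theorem Agree.mono {t t' : ℕ} {σ τ : List (A × S) → (A →₀ ℝ)} (h1 : Agree t σ τ) (h : t' ≤ t) :
    Agree t' σ τ := fun l hl => h1 l (hl.trans_le h)

variable {q : K → A → (S × K →₀ ℝ)} 
  {g : K → A → ℝ}


theorem value_net (hq : ∀ k a, q k a ∈ Δf (S × K))
    (hg : ∀ k a, g k a ∈ Icc (0:ℝ) 1) [Nonempty A] (α : ℝ) {δ : ℝ} (hδ : 0 < δ) :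
    ∃ F : Finset (ℕ → ℝ), (∀ i ∈ F, i ∈ Θ α) ∧
      ∀ i ∈ Θ α, ∃ j ∈ F, ∀ p ∈ ΔK K, |value q g i p - value q g j p| ≤ δ :=
  exists_net (Θ α) (fun θ p => value q g θ p) (fun _ h _ hp => value_bounds hq hg h.1 hp)
    (fun _ h _ hp _ hp' => value_lip hq hg h.1 hp hp') hδ

open Filter Topology in
theorem recur (hq : ∀ k a, q k a ∈ Δf (S × K))
    (hg : ∀ k a, g k a ∈ Icc (0:ℝ) 1) [Nonempty A] {ε : ℝ} (hε : 0 < ε) : ∃ α0 > 0, ∀ θ' ∈ Θ α0, ∀ η > 0, ∃ θ'' ∈ Θ η,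
    ∀ p ∈ ΔK K, |value q g θ' p - value q g θ'' p| ≤ 2 * ε := by
  obtain ⟨F, hF, hFn⟩ := value_net hq hg 1 hε
  have key : ∀ i ∈ F, ∀ᶠ α in 𝓝[>] (0:ℝ),
      (∃ θ ∈ Θ α, ∀ p ∈ ΔK K, |value q g θ p - value q g i p| ≤ ε) →
        ∀ η > 0, ∃ θ ∈ Θ η, ∀ p ∈ ΔK K, |value q g θ p - value q g i p| ≤ ε := by
    intro i _
    by_cases h : ∀ η > 0, ∃ θ ∈ Θ η, ∀ p ∈ ΔK K, |value q g θ p - value q g i p| ≤ ε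
    · exact Eventually.of_forall fun _ _ => h
    · push Not at h
      obtain ⟨η, hη, h⟩ := h
      filter_upwards [Ioo_mem_nhdsGT hη] with α hα
      rintro ⟨θ, hθ, hn⟩
      obtain ⟨p, hp, hlt⟩ := h θ (Θ_mono hα.2.le hθ)
      exact absurd (hn p hp) (not_le.2 hlt)
  obtain ⟨α, hα, h01⟩ := (((Filter.eventually_all_finset F).2 key).and
    (Ioo_mem_nhdsGT (zero_lt_one' ℝ))).exists
  refine ⟨α, h01.1, fun θ' hθ' η hη => ?_⟩
  obtain ⟨j, hj, hn⟩ := hFn θ' (Θ_mono h01.2.le hθ')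
  obtain ⟨θ'', h1, h2⟩ := hα j hj ⟨θ', hθ', hn⟩ η hη
  refine ⟨θ'', h1, fun p hp => ?_⟩
  have a1 := hn p hp
  have a2 := h2 p hp
  rw [abs_le] at *
  constructor <;> linarith

open Filter Topology in
theorem upper_one (hq : ∀ k a, q k a ∈ Δf (S × K))
    (hg : ∀ k a, g k a ∈ Icc (0:ℝ) 1) [Nonempty A] {ε : ℝ} (hε : 0 < ε) {θ' : ℕ → ℝ} (h' : IsEval θ')
    (hr : ∀ η > 0, ∃ θ'' ∈ Θ η, ∀ p ∈ ΔK K, |value q g θ' p - value q g θ'' p| ≤ 2 * ε) :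
    ∃ β > 0, ∀ θ ∈ Θ β, ∀ p ∈ ΔK K, value q g θ p ≤ value q g θ' p + 8 * ε := by
  have hw : ∀ p ∈ ΔK K, ∀ τ : List (A × S) → (A →₀ ℝ), IsStrat τ → ∀ t : ℕ,
      pay θ' (fun j => stagePay q g τ p (t + j)) ≤ value q g θ' p + 6 * ε := by
    intro p hp τ hτ t
    obtain ⟨θ'', h2, hc⟩ := hr (ε / (t + 1)) (by positivity)
    obtain ⟨τ', h3, -, h5⟩ := dom_shift hq hg h' h2.1
      (dom_of_value hq hg h' (δ := 2 * ε) (δ' := 3 * ε) (by linarith)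
        (fun p hp => by linarith [(abs_le.1 (hc p hp)).2])) t p hp.1 τ hτ
    have h6 := (abs_le.1 (pay_shift h2.1 (sp_unit hq hg h3 hp) t)).2
    have h7 : (t:ℝ) * imp' θ'' ≤ ε := by
      calc (t:ℝ) * imp' θ'' ≤ (t + 1) * (ε / (t + 1)) := by
            refine mul_le_mul (by linarith) h2.2 h2.1.imp'_nonneg (by positivity)
        _ = ε := by field_simp
    have h8 : pay θ'' (stagePay q g τ' p) ≤ value q g θ'' p := payoff_le_value hq hg h2.1 h3 hp
    have h9 := (abs_le.1 (hc p hp)).1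
    rw [hp.2] at h5
    linarith
  obtain ⟨J, hJ⟩ : ∃ J : ℕ, 1 - ε < ∑ j ∈ Finset.range J, θ' j :=
    ((h'.hasSum.tendsto_sum_nat).eventually (lt_mem_nhds (by linarith : 1 - ε < 1))).exists
  refine ⟨ε / (J + 1), by positivity, fun θ hθ p hp => value_le fun τ hτ => ?_⟩
  have := pay_le_of_windows hθ.1 (sp_unit hq hg hτ hp) h' hJ.le (by
    calc (J:ℝ) * imp' θ ≤ (J + 1) * (ε / (J + 1)) := by
            refine mul_le_mul (by linarith) hθ.2 hθ.1.imp'_nonneg (by positivity)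
        _ = ε := by field_simp) (hw p hp τ hτ)
  have e : payoff q g θ τ p = pay θ (stagePay q g τ p) := rfl
  rw [e]; linarith

open Filter Topology in
theorem value_cauchy (hq : ∀ k a, q k a ∈ Δf (S × K))
    (hg : ∀ k a, g k a ∈ Icc (0:ℝ) 1) [Nonempty A] {ε : ℝ} (hε : 0 < ε) : ∃ α > 0, ∀ θ ∈ Θ α, ∀ θ' ∈ Θ α,
    ∀ p ∈ ΔK K, value q g θ p ≤ value q g θ' p + 9 * ε := by
  obtain ⟨α0, h0, hr⟩ := recur hq hg hε
  obtain ⟨F, hF, hFn⟩ := value_net hq hg α0 hε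
  have key : ∀ i ∈ F, ∀ᶠ α in 𝓝[>] (0:ℝ), ∀ θ ∈ Θ α, ∀ p ∈ ΔK K,
      value q g θ p ≤ value q g i p + 8 * ε := by
    intro i hi
    obtain ⟨β, hβ, h⟩ := upper_one hq hg hε (hF i hi).1 (hr i (hF i hi))
    filter_upwards [Ioo_mem_nhdsGT hβ] with α hα θ hθ
    exact h θ (Θ_mono hα.2.le hθ)
  obtain ⟨α, hα, h01⟩ := (((Filter.eventually_all_finset F).2 key).and (Ioo_mem_nhdsGT h0)).exists
  refine ⟨α, h01.1, fun θ hθ θ' hθ' p hp => ?_⟩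
  obtain ⟨j, hj, hn⟩ := hFn θ' (Θ_mono h01.2.le hθ')
  have a1 := hα j hj θ hθ p hp
  have a2 := (abs_le.1 (hn p hp)).1
  linarith

open Filter Topology in
theorem exists_vstar (hq : ∀ k a, q k a ∈ Δf (S × K))
    (hg : ∀ k a, g k a ∈ Icc (0:ℝ) 1) [Nonempty A] : ∃ vs : (K → ℝ) → ℝ, ∀ ε > 0, ∃ α > 0, ∀ θ ∈ Θ α,
    ∀ p ∈ ΔK K, |value q g θ p - vs p| ≤ ε := by
  have hU : ∀ α > 0, ∃ n0 : ℕ, ∀ n ≥ n0, U (n + 1) ∈ Θ α := by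
    intro α hα
    obtain ⟨n0, hn0⟩ := exists_nat_gt (2 / α)
    refine ⟨n0, fun n hn => U_mem (Nat.succ_pos n) ?_⟩
    have h1 : (n0:ℝ) ≤ n := by exact_mod_cast hn
    rw [div_lt_iff₀ hα] at hn0
    rw [div_le_iff₀ (by positivity)]
    push_cast
    nlinarith
  have hc : ∀ ε > 0, ∃ α > 0, ∀ θ ∈ Θ α, ∀ θ' ∈ Θ α, ∀ p ∈ ΔK K,
      |value q g θ p - value q g θ' p| ≤ ε := by
    intro ε hε
    obtain ⟨α, hα, h⟩ := value_cauchy hq hg (ε := ε / 9) (by positivity)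
    refine ⟨α, hα, fun θ hθ θ' hθ' p hp => ?_⟩
    have h1 := h θ hθ θ' hθ' p hp
    have h2 := h θ' hθ' θ hθ p hp
    rw [abs_le]; constructor <;> linarith
  have hlim : ∀ p : K → ℝ, ∃ v : ℝ, p ∈ ΔK K →
      Tendsto (fun n : ℕ => value q g (U (n + 1)) p) atTop (𝓝 v) := by
    intro p
    by_cases hp : p ∈ ΔK K
    · have : CauchySeq (fun n : ℕ => value q g (U (n + 1)) p) := by
        rw [Metric.cauchySeq_iff']
        intro ε hε
        obtain ⟨α, hα, h⟩ := hc (ε / 2) (by positivity)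
        obtain ⟨n0, hn0⟩ := hU α hα
        refine ⟨n0, fun n hn => ?_⟩
        rw [Real.dist_eq]
        have := h _ (hn0 n hn) _ (hn0 n0 le_rfl) p hp
        linarith
      obtain ⟨v, hv⟩ := cauchySeq_tendsto_of_complete this
      exact ⟨v, fun _ => hv⟩
    · exact ⟨0, fun h => absurd h hp⟩
  choose vs hvs using hlim
  refine ⟨vs, fun ε hε => ?_⟩
  obtain ⟨α, hα, h⟩ := hc ε hε
  refine ⟨α, hα, fun θ hθ p hp => ?_⟩
  obtain ⟨n0, hn0⟩ := hU α hα
  refine le_of_tendsto ((tendsto_const_nhds.sub (hvs p hp)).abs) ?_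
  filter_upwards [eventually_ge_atTop n0] with n hn
  exact h θ hθ _ (hn0 n hn) p hp

theorem block (hq : ∀ k a, q k a ∈ Δf (S × K))
    (hg : ∀ k a, g k a ∈ Icc (0:ℝ) 1) [Nonempty A] {p : K → ℝ} (hp : p ∈ ΔK K) {α : ℝ} {N : ℕ} (hN : 0 < N)
    (hNα : 2 / N ≤ α) {t : ℕ} {σ : List (A × S) → (A →₀ ℝ)} {b δ : ℝ} (hδ : 0 < δ)
    (hInv : ∀ θ ∈ Θ α, ∃ τ : List (A × S) → (A →₀ ℝ), IsStrat τ ∧ Agree t τ σ ∧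
      b ≤ pay θ (fun j => stagePay q g τ p (t + j))) :
    ∃ τ : List (A × S) → (A →₀ ℝ), IsStrat τ ∧ Agree t τ σ ∧
      b - δ ≤ pay (U N) (fun j => stagePay q g τ p (t + j)) ∧
      ∀ θ ∈ Θ α, ∃ τ' : List (A × S) → (A →₀ ℝ), IsStrat τ' ∧ Agree (t + N) τ' τ ∧
        b - δ ≤ pay θ (fun j => stagePay q g τ' p (t + N + j)) := by
  classical
  obtain ⟨F, hF, hFn⟩ := value_net hq hg α (δ := δ / 4) (by positivity)
  let ϑ : Option F → ℕ → ℝ := fun i => i.elim (U N) (fun j => delay^[N] j.1)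
  have hϑ : ∀ i, ϑ i ∈ Θ α := by
    rintro (_ | j)
    · exact U_mem hN hNα
    · exact delay_iter_mem (hF j.1 j.2) N
  have habs : ∀ {τ : List (A × S) → (A →₀ ℝ)}, IsStrat τ → ∀ j, |stagePay q g τ p (t + j)| ≤ 1 := by
    intro τ hτ j
    have := sp_abs hq hg hτ hp.1 (t + j)
    rwa [hp.2] at this
  let C : Set (Option F → ℝ) := {y | ∃ τ : Option F → List (A × S) → (A →₀ ℝ),
    (∀ i, IsStrat (τ i)) ∧ Agree t (τ none) σ ∧ (∀ i, Agree (t + N) (τ i) (τ none)) ∧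
    ∀ i, y i = pay (ϑ i) (fun j => stagePay q g (τ i) p (t + j))}
  have hC : Convex ℝ C := by
    rintro y ⟨τ, h1, h2, h3, h4⟩ y' ⟨τ', h1', h2', h3', h4'⟩ a a' ha ha' haa
    obtain rfl : a' = 1 - a := by linarith
    have hl : a ∈ Icc (0:ℝ) 1 := ⟨ha, by linarith⟩
    refine ⟨fun i => mixs a (τ i) (τ' i), fun i => mixs_strat hl (h1 i) (h1' i), ?_,
      fun i => mixs_agree a (h3 i) (h3' i), fun i => ?_⟩
    · have := mixs_agree a h2 h2'
      rwa [mixs_self] at this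
    · simp only [stagePay_mixs hl (h1 i) (h1' i)]
      rw [pay_lin (hϑ i).1 (habs (h1 i)) (habs (h1' i)), ← h4, ← h4']
      rfl
  obtain ⟨y, ⟨τ, h1, h2, h3, h4⟩, hy⟩ := minimax hC (c := b) (η := δ / 2) (by
    intro w hw0 hw1
    have hmem : (∑ i, w i • ϑ i) ∈ Θ α :=
      (Θ_convex α).sum_mem (fun i _ => hw0 i) hw1 fun i _ => hϑ i
    obtain ⟨τ, a1, a2, a3⟩ := hInv _ hmem
    refine ⟨fun i => pay (ϑ i) (fun j => stagePay q g τ p (t + j)),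
      ⟨fun _ => τ, fun _ => a1, a2, fun _ _ _ => rfl, fun _ => rfl⟩, ?_⟩
    rwa [pay_mix _ _ _ (fun i => (hϑ i).1) (habs a1)] at a3) (by positivity)
  refine ⟨τ none, h1 none, h2, ?_, fun θ hθ => ?_⟩
  · have := hy none
    rw [h4] at this
    have e : ϑ none = U N := rfl
    rw [e] at this
    linarith
  · obtain ⟨j, hj, hn⟩ := hFn θ hθ
    have a1 := hy (some ⟨j, hj⟩)
    rw [h4] at a1
    have e : ϑ (some ⟨j, hj⟩) = delay^[N] j := rfl
    rw [e, pay_delay_iter (hF j hj) (habs (h1 _))] at a1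
    obtain ⟨τ', b1, b2, b3⟩ := dom_shift hq hg (hF j hj).1 hθ.1
      (dom_of_value hq hg (hF j hj).1 (δ := δ / 4) (δ' := δ / 2) (by linarith)
        (fun p hp => by linarith [(abs_le.1 (hn p hp)).1])) (t + N) p hp.1 _ (h1 (some ⟨j, hj⟩))
    refine ⟨τ', b1, b2.trans (h3 _), ?_⟩
    rw [hp.2] at b3
    simp only [← add_assoc] at a1
    linarith

theorem good_strat (hq : ∀ k a, q k a ∈ Δf (S × K))
    (hg : ∀ k a, g k a ∈ Icc (0:ℝ) 1) [Nonempty A] {p : K → ℝ} (hp : p ∈ ΔK K) {α : ℝ} {N : ℕ} (hN : 0 < N)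
    (hNα : 2 / N ≤ α) {b δ : ℝ} (hδ : 0 < δ)
    (hInv : ∀ θ ∈ Θ α, ∃ τ : List (A × S) → (A →₀ ℝ), IsStrat τ ∧ b ≤ payoff q g θ τ p) :
    ∃ σ : List (A × S) → (A →₀ ℝ), IsStrat σ ∧
      ∀ i : ℕ, N * (b - δ) ≤ ∑ j ∈ Finset.range N, stagePay q g σ p (i * N + j) := by
  let B : ℕ → ℝ := fun i => b - δ + δ * (1 / 2) ^ i
  let St : ℕ → Type _ := fun i => {σ : List (A × S) → (A →₀ ℝ) // IsStrat σ ∧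
    ∀ θ ∈ Θ α, ∃ τ : List (A × S) → (A →₀ ℝ), IsStrat τ ∧ Agree (i * N) τ σ ∧
      B i ≤ pay θ (fun j => stagePay q g τ p (i * N + j))}
  obtain ⟨σ0, h0⟩ := exists_strat (A := A) (S := S)
  let s0 : St 0 := ⟨σ0, h0, by
    intro θ hθ
    obtain ⟨τ, h1, h2⟩ := hInv θ hθ
    refine ⟨τ, h1, fun l hl => by simp at hl, ?_⟩
    simp only [B, zero_mul, zero_add, pow_zero, mul_one, sub_add_cancel]
    exact h2⟩
  have hnext : ∀ i (s : St i), ∃ s' : St (i + 1), Agree (i * N) s'.1 s.1 ∧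
      B (i + 1) ≤ pay (U N) (fun j => stagePay q g s'.1 p (i * N + j)) := by
    intro i s
    obtain ⟨τ, h1, h2, h3, h4⟩ := block hq hg hp hN hNα (δ := δ * (1 / 2) ^ (i + 1)) (by positivity) s.2.2
    have e : B i - δ * (1 / 2) ^ (i + 1) = B (i + 1) := by
      simp only [B, pow_succ]; ring
    rw [e] at h3 h4
    rw [← Nat.succ_mul] at h4
    exact ⟨⟨τ, h1, h4⟩, h2, h3⟩
  choose nxt hn1 hn2 using hnext
  let sq : ∀ i, St i := fun i => Nat.rec s0 (fun i s => nxt i s) i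
  have hs1 : ∀ i, Agree (i * N) (sq (i + 1)).1 (sq i).1 := fun i => hn1 i (sq i)
  have hs2 : ∀ i, B (i + 1) ≤ pay (U N) (fun j => stagePay q g (sq (i + 1)).1 p (i * N + j)) :=
    fun i => hn2 i (sq i)
  have hs3 : ∀ i r, Agree (i * N) (sq (i + r)).1 (sq i).1 := by
    intro i r
    induction r with
    | zero => exact fun _ _ => rfl
    | succ r ih =>
      exact ((hs1 (i + r)).mono (Nat.mul_le_mul_right _ (Nat.le_add_right _ _))).trans ih
  let σ : List (A × S) → (A →₀ ℝ) := fun l => (sq (l.length + 1)).1 l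
  have hσ : ∀ i, Agree (i * N) σ (sq i).1 := by
    intro i l hl
    rcases le_total i (l.length + 1) with h | h
    · obtain ⟨r, hr⟩ := Nat.exists_eq_add_of_le h
      have := hs3 i r l hl
      rw [← hr] at this
      exact this
    · obtain ⟨r, rfl⟩ := Nat.exists_eq_add_of_le h
      have := hs3 (l.length + 1) r l (by nlinarith)
      exact this.symm
  refine ⟨σ, fun l => (sq (l.length + 1)).2.1 l, fun i => ?_⟩
  have h1 := hs2 i
  rw [pay_U] at h1
  have h2 : ∑ j ∈ Finset.range N, stagePay q g σ p (i * N + j) =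
      ∑ j ∈ Finset.range N, stagePay q g (sq (i + 1)).1 p (i * N + j) := by
    refine Finset.sum_congr rfl fun j hj => (hσ (i + 1)).stagePay_eq ?_ q g p
    have := Finset.mem_range.1 hj
    rw [Nat.succ_mul]; omega
  rw [h2]
  have hN' : (0:ℝ) < N := by exact_mod_cast hN
  rw [one_div, inv_mul_eq_div, le_div_iff₀ hN'] at h1
  have h3 : b - δ ≤ B (i + 1) := by simp only [B]; linarith [show 0 ≤ δ * (1/2) ^ (i+1) by positivity]
  nlinarith

end
end Stmt18

theorem stmt18 (K A S : Type*) [Fintype K] [Nonempty K] [Nonempty A] [Nonempty S]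
    (q : K → A → (S × K →₀ ℝ)) (hq : ∀ k a, q k a ∈ Stmt18.Δf (S × K))
    (g : K → A → ℝ) (hg : ∀ k a, g k a ∈ Icc (0:ℝ) 1) :
    ∃ vstar : (K → ℝ) → ℝ,
      ∀ ε > (0:ℝ), ∃ α > (0:ℝ),
        ∃ σ : (K → ℝ) → (List (A × S) → (A →₀ ℝ)), (∀ p, Stmt18.IsStrat (σ p)) ∧
        ∀ θ : ℕ → ℝ, Stmt18.IsEval θ → Stmt18.impatience θ ≤ α →
          ∀ p ∈ Stmt18.ΔK K,
            |Stmt18.value q g θ p - vstar p| ≤ ε ∧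
            Stmt18.payoff q g θ (σ p) p ≥ vstar p - ε := by
  open Stmt18 in
  obtain ⟨vs, hvs⟩ := exists_vstar hq hg
  refine ⟨vs, fun ε hε => ?_⟩
  obtain ⟨e, he0, he1, heε⟩ : ∃ e : ℝ, 0 < e ∧ e ≤ 1 / 8 ∧ e ≤ ε / 8 :=
    ⟨min (1 / 8) (ε / 8), by positivity, min_le_left _ _, min_le_right _ _⟩
  obtain ⟨α0, hα0, hv⟩ := hvs e he0
  obtain ⟨N, hN⟩ := exists_nat_gt (2 / α0)
  have hN0' : (0:ℝ) < N := lt_trans (by positivity) hN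
  have hN0 : 0 < N := by exact_mod_cast hN0'
  have hNα : 2 / (N:ℝ) ≤ α0 := by
    rw [div_lt_iff₀ hα0] at hN
    rw [div_le_iff₀ hN0']; linarith
  obtain ⟨L, hL⟩ := exists_nat_gt (4 * N / e)
  have hL0' : (0:ℝ) < L := lt_trans (by positivity) hL
  have hL0 : 0 < L := by exact_mod_cast hL0'
  have hLe : 4 * N / (L:ℝ) ≤ e := by
    rw [div_lt_iff₀ he0] at hL
    rw [div_le_iff₀ hL0']; linarith
  have hex : ∀ p : K → ℝ, ∃ σ : List (A × S) → (A →₀ ℝ), IsStrat σ ∧ (p ∈ ΔK K →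
      ∀ i : ℕ, N * (vs p - 2 * e - e) ≤ ∑ j ∈ Finset.range N, stagePay q g σ p (i * N + j)) := by
    intro p
    by_cases hp : p ∈ ΔK K
    · obtain ⟨σ, h1, h2⟩ := good_strat hq hg hp hN0 hNα (b := vs p - 2 * e) he0 (by
        intro θ hθ
        obtain ⟨τ, a1, a2⟩ := exists_near (q := q) (g := g) θ p he0
        exact ⟨τ, a1, by linarith [(abs_le.1 (hv θ hθ p hp)).1]⟩)
      exact ⟨σ, h1, fun _ => h2⟩
    · obtain ⟨σ, h1⟩ := exists_strat (A := A) (S := S)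
      exact ⟨σ, h1, fun h => absurd h hp⟩
  choose σ hσ hσb using hex
  refine ⟨min (α0 / 2) (e / (2 * L)), by positivity, σ, hσ, fun θ hθ hI p hp => ?_⟩
  have hi := hθ.imp'_le
  have hi1 : imp' θ ≤ α0 := by linarith [hI.trans (min_le_left _ _)]
  have hi2 : L * imp' θ ≤ e := by
    have h1 := hI.trans (min_le_right _ _)
    rw [le_div_iff₀ (by positivity)] at h1
    nlinarith
  refine ⟨(hv θ ⟨hθ, hi1⟩ p hp).trans (by linarith), ?_⟩
  have hU := abs_le.1 (hv _ (U_mem hN0 hNα) p hp)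
  have hUb := value_bounds hq hg (U_eval hN0) hp
  have := pay_ge_of_blocks hθ (sp_unit hq hg (hσ p) hp) hN0 (b := vs p - 2 * e - e)
    (by linarith [hU.1, hUb.2]) (by linarith [hU.2, hUb.1]) (hσb p hp) hL0
  have e1 : payoff q g θ (σ p) p = pay θ (stagePay q g (σ p) p) := rfl
  rw [e1]
  linarith
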